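/- arXiv:1508.04484 — 3 statements merged into one kernel-verified Lean document; each statement's English description precedes it below -/
import Mathlib

section
/- For positions x, x' ∈ ℤ_{≥0}^n of Nim^=_{n,k}, if x'_i ≤ x_i for all i and Σ_{i=1}^n (x_i − x'_i) = 1 (i.e., x' is obtained from x by removing a single token), then T_{n,k}(x) − 1 ≤ T_{n,k}(x') ≤ T_{n,k}(x). -/
/-- A move in Exact k-Nim `Nim^=_{n,k}`: all piles weakly decrease and
exactly `k` piles strictly decrease. -/
def ExactMove (n k : ℕ) (x x' : Fin n → ℕ) : Prop :=
  (∀ i, x' i ≤ x i) ∧ (Finset.univ.filter fun i => x' i < x i).card = k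

/-- There is a chain of `m` consecutive moves starting at `x`. -/
def HasChain (n k : ℕ) (x : Fin n → ℕ) (m : ℕ) : Prop :=
  ∃ f : Fin (m + 1) → Fin n → ℕ, f 0 = x ∧
    ∀ i : Fin m, ExactMove n k (f i.castSucc) (f i.succ)

/-- The Tetris function `T_{n,k}(x)`: the maximum number of consecutive moves
that can be made starting from `x`. -/
noncomputable def tetris (n k : ℕ) (x : Fin n → ℕ) : ℕ :=
  sSup {m | HasChain n k x m}

/-!
Padding every position of a play with the same extra tokens gives a play of the same length, so the
Tetris function is monotone. Conversely, let `z ≤ x` and follow a play from `x`, capping its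
positions by `z`. A move stays exact after capping unless it brings some pile from above its cap to
a value still at or above it. Such a move is skipped, which monotonicity allows, and it uses up at
least one of the `∑ i, (x i - z i)` tokens missing from `z`, so at most that many moves are lost.
-/

variable {n k l m : ℕ} {x y z : Fin n → ℕ}

namespace ExactMove

theorem add_right (h : ExactMove n k x y) (c : Fin n → ℕ) : ExactMove n k (x + c) (y + c) :=
  ⟨fun i => Nat.add_le_add_right (h.1 i) (c i), by simpa using h.2⟩

theorem sum_lt (h : ExactMove n k x y) (hk : 1 ≤ k) : ∑ i, y i < ∑ i, x i := by
  obtain ⟨i, hi⟩ := Finset.card_pos.1 (hk.trans_eq h.2.symm)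
  exact Finset.sum_lt_sum (fun j _ => h.1 j) ⟨i, Finset.mem_univ i, (Finset.mem_filter.1 hi).2⟩

theorem inf (h : ExactMove n k x y) (hzx : z ≤ x) (hyz : ∀ i, y i < x i → y i < z i) :
    ExactMove n k z (y ⊓ z) := by
  have lt_iff (i : Fin n) : (y ⊓ z) i < z i ↔ y i < x i := by
    simpa using ⟨fun hi => hi.trans_le (hzx i), hyz i⟩
  exact ⟨fun _ => inf_le_right, by simpa only [lt_iff] using h.2⟩

end ExactMove

theorem hasChain_zero (n k : ℕ) (x : Fin n → ℕ) : HasChain n k x 0 :=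
  ⟨fun _ => x, rfl, Fin.elim0⟩

theorem hasChain_succ_iff :
    HasChain n k x (m + 1) ↔ ∃ y, ExactMove n k x y ∧ HasChain n k y m := by
  constructor
  · rintro ⟨f, rfl, hf⟩
    exact ⟨f 1, hf 0, Fin.tail f, rfl, fun i => hf i.succ⟩
  · rintro ⟨y, hxy, f, rfl, hf⟩
    exact ⟨Fin.cons x f, rfl, Fin.cases hxy hf⟩

namespace HasChain

theorem mono (h : HasChain n k x m) (hxy : x ≤ y) : HasChain n k y m := by
  obtain ⟨f, rfl, hf⟩ := h
  exact ⟨fun j => f j + (y - f 0), add_tsub_cancel_of_le hxy, fun j => (hf j).add_right _⟩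

theorem le_sum (h : HasChain n k x m) (hk : 1 ≤ k) : m ≤ ∑ i, x i := by
  induction m generalizing x with
  | zero => exact Nat.zero_le _
  | succ m ih =>
    obtain ⟨y, hxy, hy⟩ := hasChain_succ_iff.1 h
    exact (ih hy).trans_lt (hxy.sum_lt hk)

theorem of_le_sub_sum (h : HasChain n k x l) (hzx : z ≤ x) (hm : m ≤ l - ∑ i, (x i - z i)) :
    HasChain n k z m := by
  induction l generalizing x z m with
  | zero =>
    obtain rfl : m = 0 := by omega
    exact hasChain_zero n k z
  | succ l ih =>
    obtain ⟨y, hxy, hy⟩ := hasChain_succ_iff.1 h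
    have deficit_le (i : Fin n) : y i - (y ⊓ z) i ≤ x i - z i := by
      rw [Pi.inf_apply, tsub_min]
      exact Nat.sub_le_sub_right (hxy.1 i) (z i)
    by_cases hyz : ∀ i, y i < x i → y i < z i
    · cases m with
      | zero => exact hasChain_zero n k z
      | succ m =>
        have sum_le : ∑ i, (y i - (y ⊓ z) i) ≤ ∑ i, (x i - z i) :=
          Finset.sum_le_sum fun i _ => deficit_le i
        exact hasChain_succ_iff.2 ⟨y ⊓ z, hxy.inf hzx hyz, ih hy inf_le_left (by omega)⟩
    · push Not at hyz
      obtain ⟨i, hyx, hzy⟩ := hyz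
      have deficit_lt : y i - (y ⊓ z) i < x i - z i := by
        rw [Pi.inf_apply, tsub_min]
        omega
      have sum_lt : ∑ i, (y i - (y ⊓ z) i) < ∑ i, (x i - z i) :=
        Finset.sum_lt_sum (fun j _ => deficit_le j) ⟨i, Finset.mem_univ i, deficit_lt⟩
      exact (ih hy inf_le_left (by omega)).mono inf_le_right

end HasChain

theorem bddAbove_hasChain (hk : 1 ≤ k) (x : Fin n → ℕ) : BddAbove {m | HasChain n k x m} :=
  ⟨∑ i, x i, fun _ h => h.le_sum hk⟩

theorem hasChain_tetris (hk : 1 ≤ k) (x : Fin n → ℕ) : HasChain n k x (tetris n k x) :=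
  Nat.sSup_mem ⟨0, hasChain_zero n k x⟩ (bddAbove_hasChain hk x)

theorem HasChain.le_tetris (h : HasChain n k x m) (hk : 1 ≤ k) : m ≤ tetris n k x :=
  le_csSup (bddAbove_hasChain hk x) h

theorem tetris_mono (hk : 1 ≤ k) : Monotone (tetris n k) := fun x _ hxy =>
  ((hasChain_tetris hk x).mono hxy).le_tetris hk

theorem tetris_sub_sum_le (hk : 1 ≤ k) (hzx : z ≤ x) :
    tetris n k x - ∑ i, (x i - z i) ≤ tetris n k z :=
  ((hasChain_tetris hk x).of_le_sub_sum hzx le_rfl).le_tetris hk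

theorem tetris_single_token_general (n k : ℕ) (hk1 : 1 ≤ k) (x x' : Fin n → ℕ)
    (hle : ∀ i, x' i ≤ x i) :
    tetris n k x - ∑ i, (x i - x' i) ≤ tetris n k x' ∧ tetris n k x' ≤ tetris n k x :=
  ⟨tetris_sub_sum_le hk1 hle, tetris_mono hk1 hle⟩

/-- Removing a single token changes the Tetris value by at most one:
if `x' ≤ x` componentwise and `Σᵢ (xᵢ - x'ᵢ) = 1`, then
`T_{n,k}(x) - 1 ≤ T_{n,k}(x') ≤ T_{n,k}(x)`. -/
theorem tetris_single_token (n k : ℕ) (hk1 : 1 ≤ k) (hkn : k ≤ n)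
    (x x' : Fin n → ℕ) (hle : ∀ i, x' i ≤ x i)
    (hsum : ∑ i, (x i - x' i) = 1) :
    tetris n k x - 1 ≤ tetris n k x' ∧ tetris n k x' ≤ tetris n k x := by
  simpa only [hsum] using tetris_single_token_general n k hk1 x x' hle
end

section
/- Let x ∈ ℤ_{≥0}^n be a position of Nim^=_{n,k}. If a nonnegative integer g satisfies k·g ≤ Σ_{i=1}^n min(x_i, g) and Σ_{i=1}^n min(x_i, g+1) < k·(g+1), then T_{n,k}(x) = g. -/
/-!
A chain of `m` moves exists from `x` if and only if `k * m ≤ ∑ i, min (x i) m`. It is necessary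
because each of the `m` moves decreases `k` piles and pile `i` can be decreased at most
`min (x i) m` times. It is sufficient because a move can preserve the inequality: remove one token
from each of `k` piles, giving priority to the piles with more than `m` tokens when `m` further
moves are to follow. If only such piles are used, they alone supply `k * m`; if all of them are
used, the sum of the truncated piles drops by at most `k`.
-/

section

open Finset

theorem exists_subset_card_eq_and_subset_or_subset {α : Type*} {s t : Finset α} {k : ℕ}
    (hst : s ⊆ t) (hk : k ≤ #t) : ∃ u ⊆ t, #u = k ∧ (u ⊆ s ∨ s ⊆ u) := by
  rcases le_total k #s with hks | hsk
  · obtain ⟨u, hus, hu⟩ := exists_subset_card_eq hks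
    exact ⟨u, hus.trans hst, hu, .inl hus⟩
  · obtain ⟨u, hsu, hut, hu⟩ := exists_subsuperset_card_eq hst hsk hk
    exact ⟨u, hut, hu, .inr hsu⟩

section TruncatedSums

variable {ι : Type*} [Fintype ι]

theorem sum_min_le_card_pos_mul (x : ι → ℕ) (m : ℕ) :
    ∑ i, min (x i) m ≤ #{i | 0 < x i} * m := by
  rw [card_filter, sum_mul]
  refine sum_le_sum fun i _ ↦ ?_
  split_ifs <;> omega

theorem sum_min_add_card_lt_le {x x' : ι → ℕ} (hle : ∀ i, x' i ≤ x i) (m : ℕ) :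
    ∑ i, min (x' i) m + #{i | x' i < x i} ≤ ∑ i, min (x i) (m + 1) := by
  rw [card_filter, ← sum_add_distrib]
  refine sum_le_sum fun i _ ↦ ?_
  have := hle i
  split_ifs <;> omega

end TruncatedSums

section DecrementOn

variable {ι : Type*} [DecidableEq ι]

/-- The position obtained from `x` by removing one token from every pile in `s`. An empty pile
in `s` stays empty. -/
def decrementOn (s : Finset ι) (x : ι → ℕ) (i : ι) : ℕ :=
  if i ∈ s then x i - 1 else x i

theorem decrementOn_le (s : Finset ι) (x : ι → ℕ) (i : ι) : decrementOn s x i ≤ x i := by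
  unfold decrementOn
  split_ifs <;> omega

theorem decrementOn_lt_iff {s : Finset ι} {x : ι → ℕ} (hpos : ∀ i ∈ s, 0 < x i) {i : ι} :
    decrementOn s x i < x i ↔ i ∈ s := by
  unfold decrementOn
  split_ifs with hi
  · simp [hi, hpos i hi]
  · simp [hi]

theorem exactMove_decrementOn {n : ℕ} {s : Finset (Fin n)} {x : Fin n → ℕ}
    (hpos : ∀ i ∈ s, 0 < x i) : ExactMove n #s x (decrementOn s x) :=
  ⟨decrementOn_le s x, by simp only [decrementOn_lt_iff hpos, filter_univ_mem]⟩

variable [Fintype ι]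

theorem card_mul_le_sum_min_decrementOn {s : Finset ι} {x : ι → ℕ} {m : ℕ}
    (hs : ∀ i ∈ s, m < x i) : #s * m ≤ ∑ i, min (decrementOn s x i) m :=
  calc #s * m
    _ ≤ ∑ i ∈ s, min (decrementOn s x i) m := by
      refine card_nsmul_le_sum s _ m fun i hi ↦ ?_
      have := hs i hi
      simp only [decrementOn, if_pos hi]
      omega
    _ ≤ ∑ i, min (decrementOn s x i) m := sum_le_sum_of_subset (subset_univ s)

theorem sum_min_le_sum_min_decrementOn_add_card {s : Finset ι} {x : ι → ℕ} {m : ℕ}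
    (hs : ∀ i, m < x i → i ∈ s) :
    ∑ i, min (x i) (m + 1) ≤ ∑ i, min (decrementOn s x i) m + #s := by
  have hcard : #s = ∑ i, if i ∈ s then 1 else 0 := by simp
  rw [hcard, ← sum_add_distrib]
  refine sum_le_sum fun i _ ↦ ?_
  have := hs i
  unfold decrementOn
  split_ifs <;> grind

theorem exists_mul_le_sum_min_decrementOn {x : ι → ℕ} {k m : ℕ}
    (h : k * (m + 1) ≤ ∑ i, min (x i) (m + 1)) :
    ∃ s : Finset ι, #s = k ∧ (∀ i ∈ s, 0 < x i) ∧
      k * m ≤ ∑ i, min (decrementOn s x i) m := by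
  have hk : k ≤ #{i | 0 < x i} :=
    Nat.le_of_mul_le_mul_right (h.trans (sum_min_le_card_pos_mul x (m + 1))) m.succ_pos
  have hlarge : ({i | m < x i} : Finset ι) ⊆ ({i | 0 < x i} : Finset ι) :=
    monotone_filter_right univ fun _ _ hi ↦ m.zero_le.trans_lt hi
  obtain ⟨s, hpos, rfl, hs | hs⟩ := exists_subset_card_eq_and_subset_or_subset hlarge hk
  · exact ⟨s, rfl, fun i hi ↦ (mem_filter_univ i).1 (hpos hi),
      card_mul_le_sum_min_decrementOn fun i hi ↦ (mem_filter_univ i).1 (hs hi)⟩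
  · have hdrop : ∑ i, min (x i) (m + 1) ≤ ∑ i, min (decrementOn s x i) m + #s :=
      sum_min_le_sum_min_decrementOn_add_card fun i hi ↦ hs ((mem_filter_univ i).2 hi)
    exact ⟨s, rfl, fun i hi ↦ (mem_filter_univ i).1 (hpos hi), by linarith⟩

end DecrementOn

namespace HasChain

variable {n k m : ℕ} {x : Fin n → ℕ}

theorem zero : HasChain n k x 0 :=
  ⟨fun _ ↦ x, rfl, fun i ↦ i.elim0⟩

theorem of_le {m' : ℕ} (hm : m' ≤ m) : HasChain n k x m → HasChain n k x m'
  | ⟨f, hf₀, hf⟩ =>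
    ⟨fun i ↦ f (i.castLE (Nat.succ_le_succ hm)), hf₀, fun i ↦ hf (i.castLE hm)⟩

theorem succ_iff :
    HasChain n k x (m + 1) ↔ ∃ x', ExactMove n k x x' ∧ HasChain n k x' m := by
  constructor
  · rintro ⟨f, rfl, hf⟩
    exact ⟨f 1, hf 0, fun i ↦ f i.succ, rfl, fun i ↦ hf i.succ⟩
  · rintro ⟨_, hmove, f, rfl, hf⟩
    exact ⟨Fin.cons x f, rfl, Fin.cases hmove hf⟩

theorem mul_le_sum_min (h : HasChain n k x m) : k * m ≤ ∑ i, min (x i) m := by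
  induction m generalizing x with
  | zero => simp
  | succ m ih =>
    obtain ⟨x', ⟨hle, hcard⟩, hchain⟩ := succ_iff.1 h
    calc k * (m + 1) = k * m + k := Nat.mul_succ k m
      _ ≤ ∑ i, min (x' i) m + k := Nat.add_le_add_right (ih hchain) k
      _ ≤ ∑ i, min (x i) (m + 1) := hcard ▸ sum_min_add_card_lt_le hle m

theorem of_mul_le_sum_min (h : k * m ≤ ∑ i, min (x i) m) : HasChain n k x m := by
  induction m generalizing x with
  | zero => exact zero
  | succ m ih =>
    obtain ⟨s, rfl, hpos, hs⟩ := exists_mul_le_sum_min_decrementOn h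
    exact succ_iff.2 ⟨decrementOn s x, exactMove_decrementOn hpos, ih hs⟩

end HasChain

end

/-- If `k·g ≤ Σᵢ min(xᵢ, g)` and `Σᵢ min(xᵢ, g+1) < k·(g+1)`, then `T_{n,k}(x) = g`. -/
theorem tetris_eq_of_min_sums (n k : ℕ) (hk1 : 1 ≤ k) (hkn : k ≤ n)
    (x : Fin n → ℕ) (g : ℕ)
    (h1 : k * g ≤ ∑ i, min (x i) g)
    (h2 : ∑ i, min (x i) (g + 1) < k * (g + 1)) :
    tetris n k x = g := by
  have hgreatest : IsGreatest {m | HasChain n k x m} g := by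
    refine ⟨.of_mul_le_sum_min h1, fun m hm ↦ ?_⟩
    by_contra! hlt
    exact h2.not_ge (hm.of_le hlt).mul_le_sum_min
  exact hgreatest.csSup_eq
end

section
/- For every position x of Moore's Nim Nim^≤_{n,k}, x is a P-position (i.e., G(x) = 0) if and only if M(x) = 0. -/
/-- A move in Moore's Nim `Nim^≤_{n,k}`: all piles weakly decrease, at least one and
at most `k` piles strictly decrease. -/
def MooreMove (n k : ℕ) (x x' : Fin n → ℕ) : Prop :=
  x' ≠ x ∧ (∀ i, x' i ≤ x i) ∧ (Finset.univ.filter fun i => x' i < x i).card ≤ k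

/-- The Sprague–Grundy function of Moore's Nim, defined by the mex recursion. -/
noncomputable def mgrundy (n k : ℕ) (x : Fin n → ℕ) : ℕ :=
  sInf {g : ℕ | ∀ x' : Fin n → ℕ, MooreMove n k x x' → mgrundy n k x' ≠ g}
termination_by ∑ i, x i
decreasing_by
  rename_i hmv
  have hne := hmv.1
  have hle := hmv.2.1
  have hex : ∃ i, x' i < x i := by
    by_contra hc
    push_neg at hc
    exact hne (funext fun i => le_antisymm (hle i) (hc i))
  obtain ⟨i, hi⟩ := hex
  exact Finset.sum_lt_sum (fun j _ => hle j) ⟨i, Finset.mem_univ i, hi⟩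

/-- Moore's function `M(x) = Σ_j y_j (k+1)^j` where `y_j = (Σ_i x_{ij}) mod (k+1)`
and `x_{ij} = x_i / 2^j % 2` is the `j`-th binary digit of `x_i`. -/
noncomputable def mooreM (n k : ℕ) (x : Fin n → ℕ) : ℕ :=
  ∑ᶠ j : ℕ, ((∑ i, x i / 2 ^ j % 2) % (k + 1)) * (k + 1) ^ j

/-!
The positions all of whose binary digit columns have a sum divisible by `k + 1` form the kernel of
the game. A move between two of them is impossible: in the highest column that changes, digits can
only drop from `1` to `0`, so at least `k + 1` of them do, and each belongs to a pile that
decreases.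

To move into the kernel, correct the columns from the top down, keeping a set `S` of at most `k`
piles that have already decreased, whose lower digits are therefore free. If the current column has
`b` ones outside `S` and `s = #S`, lowering some of those ones (which adds their piles to `S`) and
choosing the digits in `S` at will realises every nonnegative sum from `b - (k - s)` to `b + s`; of
these `k + 1` consecutive integers, one is a nonnegative multiple of `k + 1`.
-/

section BitColumn

variable {ι : Type*} [Fintype ι]

/-- The `j`-th column of the binary array `x_{ij}` of the paper, encoded as the set of the indices
`i` with `x_{ij} = 1`. -/
def bitColumn (x : ι → ℕ) (j : ℕ) : Finset ι := {i | (x i).testBit j}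

/-- The candidate P-positions, for `m = k + 1`: every column of binary digits has a sum divisible
by `m`. -/
def IsBalanced (m : ℕ) (x : ι → ℕ) : Prop := ∀ j, m ∣ (bitColumn x j).card

@[simp]
theorem mem_bitColumn {x : ι → ℕ} {i : ι} {j : ℕ} : i ∈ bitColumn x j ↔ (x i).testBit j := by
  simp [bitColumn]

theorem sum_div_two_pow_mod_two (x : ι → ℕ) (j : ℕ) :
    ∑ i, x i / 2 ^ j % 2 = (bitColumn x j).card := by
  simp only [bitColumn, Finset.card_filter, ← Nat.toNat_testBit, Bool.toNat, Bool.cond_eq_ite]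

theorem exists_forall_ge_bitColumn_eq_empty (x : ι → ℕ) : ∃ N, ∀ j ≥ N, bitColumn x j = ∅ := by
  refine ⟨∑ i, x i, fun j hj ↦ Finset.eq_empty_of_forall_notMem fun i ↦ ?_⟩
  have hxi : x i < 2 ^ j :=
    ((Finset.single_le_sum_of_canonicallyOrdered (Finset.mem_univ i)).trans hj).trans_lt
      Nat.lt_two_pow_self
  simp [Nat.testBit_lt_two_pow hxi]

theorem eq_of_forall_mem_bitColumn_iff {x y : ι → ℕ} {i : ι}
    (h : ∀ j, i ∈ bitColumn x j ↔ i ∈ bitColumn y j) : x i = y i :=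
  Nat.eq_of_testBit_eq fun j ↦ Bool.eq_iff_iff.2 (by simpa using h j)

theorem lt_of_mem_bitColumn {x y : ι → ℕ} {i : ι} {j : ℕ}
    (habove : ∀ l > j, bitColumn y l = bitColumn x l)
    (hx : i ∈ bitColumn x j) (hy : i ∉ bitColumn y j) : y i < x i := by
  refine Nat.lt_of_testBit j (by simpa using hy) (mem_bitColumn.1 hx) fun l hl ↦ ?_
  simpa [← Bool.eq_iff_iff] using Finset.ext_iff.1 (habove l hl) i

theorem exists_isGreatest_bitColumn_ne {x y : ι → ℕ} (h : y ≠ x) :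
    ∃ j, IsGreatest {j | bitColumn y j ≠ bitColumn x j} j := by
  obtain ⟨N, hN⟩ := exists_forall_ge_bitColumn_eq_empty x
  obtain ⟨M, hM⟩ := exists_forall_ge_bitColumn_eq_empty y
  refine BddAbove.exists_isGreatest_of_nonempty ⟨max M N, fun j hj ↦ ?_⟩ ?_
  · by_contra! hlt
    exact hj (by rw [hM j (by omega), hN j (by omega)])
  · by_contra hempty
    have hcol (j : ℕ) : bitColumn y j = bitColumn x j := by
      by_contra hj
      exact hempty ⟨j, hj⟩
    exact h (funext fun i ↦ eq_of_forall_mem_bitColumn_iff fun j ↦ by rw [hcol j])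

theorem exists_bitColumn_eq (x : ι → ℕ) (N : ℕ) (C : Finset ι) :
    ∃ y : ι → ℕ, bitColumn y N = C ∧ ∀ j ≠ N, bitColumn y j = bitColumn x j := by
  classical
  refine ⟨fun i ↦ if i ∈ symmDiff C (bitColumn x N) then x i ^^^ 2 ^ N else x i, ?_, ?_⟩
  · ext i
    by_cases hC : i ∈ C <;> by_cases hx : (x i).testBit N <;> simp [Finset.mem_symmDiff, hC, hx]
  · intro j hj
    ext i
    rw [mem_bitColumn, mem_bitColumn]
    split_ifs <;> simp [Nat.testBit_two_pow_of_ne hj.symm]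

theorem IsBalanced.le_card_filter_lt {m : ℕ} {x y : ι → ℕ} (hx : IsBalanced m x)
    (hy : IsBalanced m y) (hlt : y < x) : m ≤ (Finset.univ.filter fun i ↦ y i < x i).card := by
  classical
  obtain ⟨j, hne, hmax⟩ := exists_isGreatest_bitColumn_ne hlt.ne
  have habove : ∀ l > j, bitColumn y l = bitColumn x l := fun l hl ↦
    not_not.1 fun h ↦ hl.not_ge (hmax h)
  have hsub : bitColumn y j ⊆ bitColumn x j := fun i hiy ↦ by
    by_contra hix
    exact (lt_of_mem_bitColumn (fun l hl ↦ (habove l hl).symm) hiy hix).not_ge (hlt.le i)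
  have hdvd : m ∣ (bitColumn x j \ bitColumn y j).card := by
    rw [Finset.card_sdiff_of_subset hsub]
    exact Nat.dvd_sub (hx j) (hy j)
  have hpos : 0 < (bitColumn x j \ bitColumn y j).card :=
    Finset.card_pos.2 (Finset.sdiff_nonempty.2 fun h ↦ hne (hsub.antisymm h))
  refine (Nat.le_of_dvd hpos hdvd).trans (Finset.card_le_card fun i hi ↦ ?_)
  obtain ⟨hix, hiy⟩ := Finset.mem_sdiff.1 hi
  simpa using lt_of_mem_bitColumn habove hix hiy

end BitColumn

theorem exists_dvd_card_and_card_union_sdiff_le {α : Type*} [DecidableEq α] {k : ℕ}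
    {S : Finset α} (hS : S.card ≤ k) (B : Finset α) :
    ∃ C ⊆ B ∪ S, k + 1 ∣ C.card ∧ (S ∪ B \ C).card ≤ k := by
  have hcard : (B ∪ S).card = (B \ S).card + S.card := (Finset.card_sdiff_add_card B S).symm
  set b := (B \ S).card
  set s := S.card
  set c := (b + s) - (b + s) % (k + 1)
  have hmod : (b + s) % (k + 1) < k + 1 := Nat.mod_lt _ k.succ_pos
  obtain ⟨V, hVB, hV⟩ : ∃ V ⊆ B \ S, V.card = min b c :=
    Finset.exists_subset_card_eq (min_le_left b c)
  obtain ⟨C, hVC, hCBS, hC⟩ : ∃ C, V ⊆ C ∧ C ⊆ B ∪ S ∧ C.card = c :=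
    Finset.exists_subsuperset_card_eq (by grind) (by omega) (by omega)
  refine ⟨C, hCBS, hC ▸ Nat.dvd_sub_mod _, ?_⟩
  calc (S ∪ B \ C).card
      ≤ (S ∪ (B \ S) \ V).card := Finset.card_le_card (by grind)
    _ ≤ s + (b - min b c) := by
      rw [← hV, ← Finset.card_sdiff_of_subset hVB]
      exact Finset.card_union_le _ _
    _ ≤ k := by omega

/- `S` is the set of piles that have already decreased in a digit above the first `N`: the bound
`y i ≤ x i` is not required there, but they count towards the `k` piles of the move. -/
theorem exists_dvd_card_bitColumn_of_lt {ι : Type*} [Fintype ι] [DecidableEq ι] {k : ℕ} (N : ℕ)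
    (x : ι → ℕ) {S : Finset ι} (hS : S.card ≤ k) :
    ∃ y : ι → ℕ, (∀ j ≥ N, bitColumn y j = bitColumn x j) ∧
      (∀ j < N, k + 1 ∣ (bitColumn y j).card) ∧ (∀ i ∉ S, y i ≤ x i) ∧
      (S ∪ Finset.univ.filter fun i ↦ y i < x i).card ≤ k := by
  induction N generalizing x S with
  | zero => exact ⟨x, by simpa using hS⟩
  | succ N ih =>
    obtain ⟨C, hCsub, hCdvd, hCcard⟩ := exists_dvd_card_and_card_union_sdiff_le hS (bitColumn x N)
    obtain ⟨z, hzN, hzx⟩ := exists_bitColumn_eq x N C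
    obtain ⟨y, hyz, hydvd, hyle, hycard⟩ := ih z hCcard
    have hyN : bitColumn y N = C := (hyz N le_rfl).trans hzN
    have hyx : ∀ j > N, bitColumn y j = bitColumn x j := fun j hj ↦
      (hyz j hj.le).trans (hzx j hj.ne')
    have hlt : ∀ i ∈ bitColumn x N \ C, y i < x i := fun i hi ↦
      lt_of_mem_bitColumn hyx (Finset.mem_sdiff.1 hi).1 (hyN ▸ (Finset.mem_sdiff.1 hi).2)
    have hzi : ∀ i ∉ S ∪ bitColumn x N \ C, z i = x i := fun i hi ↦
      eq_of_forall_mem_bitColumn_iff fun j ↦ by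
        obtain rfl | hj := eq_or_ne j N
        · grind
        · rw [hzx j hj]
    refine ⟨y, hyx, fun j hj ↦ ?_, fun i hi ↦ ?_, ?_⟩
    · obtain rfl | hjN := eq_or_ne j N
      · exact hyN ▸ hCdvd
      · exact hydvd j (by omega)
    · by_cases hiN : i ∈ bitColumn x N \ C
      · exact (hlt i hiN).le
      · have hi' : i ∉ S ∪ bitColumn x N \ C := by grind
        exact (hyle i hi').trans_eq (hzi i hi')
    · refine (Finset.card_le_card fun i hi ↦ ?_).trans hycard
      by_cases hi' : i ∈ S ∪ bitColumn x N \ C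
      · exact Finset.mem_union_left _ hi'
      · simp_all

theorem exists_isBalanced_le {ι : Type*} [Fintype ι] (k : ℕ) (x : ι → ℕ) :
    ∃ y ≤ x, IsBalanced (k + 1) y ∧ (Finset.univ.filter fun i ↦ y i < x i).card ≤ k := by
  classical
  obtain ⟨N, hN⟩ := exists_forall_ge_bitColumn_eq_empty x
  obtain ⟨y, hyx, hydvd, hyle, hycard⟩ :=
    exists_dvd_card_bitColumn_of_lt N x (S := ∅) (k := k) (by simp)
  refine ⟨y, fun i ↦ hyle i (by simp), fun j ↦ ?_, by simpa using hycard⟩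
  obtain hj | hj := lt_or_ge j N
  · exact hydvd j hj
  · simp [hyx j hj, hN j hj]

section Game

variable {n k : ℕ} {x x' : Fin n → ℕ}

theorem MooreMove.lt (h : MooreMove n k x x') : x' < x :=
  lt_of_le_of_ne h.2.1 h.1

theorem MooreMove.not_isBalanced (h : MooreMove n k x x') (hx : IsBalanced (k + 1) x) :
    ¬ IsBalanced (k + 1) x' := fun hx' ↦
  (Nat.lt_succ_of_le h.2.2).not_ge (hx.le_card_filter_lt hx' h.lt)

theorem exists_mooreMove_isBalanced (hx : ¬ IsBalanced (k + 1) x) :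
    ∃ x', MooreMove n k x x' ∧ IsBalanced (k + 1) x' := by
  obtain ⟨x', hle, hbal, hcard⟩ := exists_isBalanced_le k x
  exact ⟨x', ⟨fun h ↦ hx (h ▸ hbal), hle, hcard⟩, hbal⟩

theorem mgrundy_eq_zero_iff_forall_ne :
    mgrundy n k x = 0 ↔ ∀ x', MooreMove n k x x' → mgrundy n k x' ≠ 0 := by
  -- `sInf ∅ = 0` in `ℕ`, so we must know that some value is not attained by any option.
  have hne : {g | ∀ x', MooreMove n k x x' → mgrundy n k x' ≠ g}.Nonempty := by
    obtain ⟨g, hg⟩ := ((Set.finite_Iic x).image (mgrundy n k)).exists_notMem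
    exact ⟨g, fun x' hmove hx' ↦ hg ⟨x', hmove.lt.le, hx'⟩⟩
  rw [mgrundy, Nat.sInf_eq_zero, or_iff_left hne.ne_empty, Set.mem_ofPred_eq]

theorem mgrundy_eq_zero_iff_of_kernel {P : (Fin n → ℕ) → Prop}
    (independent : ∀ x x', MooreMove n k x x' → P x → ¬ P x')
    (absorbing : ∀ x, ¬ P x → ∃ x', MooreMove n k x x' ∧ P x') (x : Fin n → ℕ) :
    mgrundy n k x = 0 ↔ P x := by
  induction x using WellFoundedLT.induction with
  | ind x ih =>
    rw [mgrundy_eq_zero_iff_forall_ne]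
    refine ⟨fun hx ↦ ?_, fun hx x' hmove h0 ↦ ?_⟩
    · by_contra hP
      obtain ⟨x', hmove, hx'⟩ := absorbing x hP
      exact hx x' hmove ((ih x' hmove.lt).2 hx')
    · exact independent x x' hmove hx ((ih x' hmove.lt).1 h0)

theorem mgrundy_eq_zero_iff_isBalanced : mgrundy n k x = 0 ↔ IsBalanced (k + 1) x :=
  mgrundy_eq_zero_iff_of_kernel (fun _ _ ↦ MooreMove.not_isBalanced)
    (fun _ ↦ exists_mooreMove_isBalanced) x

theorem mooreM_eq_zero_iff_isBalanced : mooreM n k x = 0 ↔ IsBalanced (k + 1) x := by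
  simp only [mooreM, sum_div_two_pow_mod_two]
  set term : ℕ → ℕ := fun j ↦ (bitColumn x j).card % (k + 1) * (k + 1) ^ j
  have hfin : term.support.Finite := by
    obtain ⟨N, hN⟩ := exists_forall_ge_bitColumn_eq_empty x
    refine (Set.finite_Iio N).subset fun j hj ↦ Set.mem_Iio.2 <| lt_of_not_ge fun hNj ↦ hj ?_
    simp [term, hN j hNj]
  have hterm (j : ℕ) : term j = 0 ↔ k + 1 ∣ (bitColumn x j).card := by
    simp [term, Nat.dvd_iff_mod_eq_zero]
  refine ⟨fun h j ↦ (hterm j).1 ?_,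
    fun h ↦ finsum_eq_zero_of_forall_eq_zero fun j ↦ (hterm j).2 (h j)⟩
  exact Nat.eq_zero_of_le_zero (h ▸ single_le_finsum j hfin fun _ ↦ Nat.zero_le _)

end Game

/-- A position of Moore's Nim `Nim^≤_{n,k}` is a P-position iff `M(x) = 0`. -/
theorem moore_P_position_iff (n k : ℕ) (hk1 : 1 ≤ k) (hkn : k ≤ n)
    (x : Fin n → ℕ) :
    mgrundy n k x = 0 ↔ mooreM n k x = 0 := by
  rw [mgrundy_eq_zero_iff_isBalanced, mooreM_eq_zero_iff_isBalanced]
end
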